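/- Let M be a λ-term. If M is β-normalizable (i.e., M β-reduces in finitely many steps to a β-normal form), then there exists a ∈ T_r(M) such that NF(a) is a positive rigid term. -/

import Mathlib

/-! Ordinary λ-terms, in de Bruijn notation. -/
inductive Lam : Type
  | var : ℕ → Lam
  | lam : Lam → Lam
  | app : Lam → Lam → Lam
  deriving DecidableEq

namespace Lam

/-- Shift the free indices `≥ d` up by one. -/
def lift (d : ℕ) : Lam → Lam
  | var n => if n < d then var n else var (n + 1)
  | lam M => lam (lift (d + 1) M)
  | app P Q => app (lift d P) (lift d Q)

/-- Capture-avoiding substitution of `N` for the free variable `k`. -/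
def subst : Lam → ℕ → Lam → Lam
  | var n, k, N => if n = k then N else if k < n then var (n - 1) else var n
  | lam M, k, N => lam (subst M (k + 1) (lift 0 N))
  | app P Q, k, N => app (subst P k N) (subst Q k N)

/-- Number of free occurrences of the variable `k`. -/
def count (k : ℕ) : Lam → ℕ
  | var n => if n = k then 1 else 0
  | lam M => count (k + 1) M
  | app P Q => count k P + count k Q

/-- One-step β-reduction. -/
inductive Beta : Lam → Lam → Prop
  | beta (M N : Lam) : Beta (app (lam M) N) (subst M 0 N)
  | lam {M M'} : Beta M M' → Beta (lam M) (lam M')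
  | appL {P P' Q} : Beta P P' → Beta (app P Q) (app P' Q)
  | appR {P Q Q'} : Beta Q Q' → Beta (app P Q) (app P Q')

/-- The head of the application spine is a variable, with no λ on the spine. -/
def neutral : Lam → Bool
  | var _ => true
  | lam _ => false
  | app P _ => neutral P

/-- Head-normal forms: `λx₁…λxₘ. x N₁ … Nₙ`. -/
def isHNF : Lam → Prop
  | var _ => True
  | lam M => isHNF M
  | app P _ => neutral P = true

/-- The head-reduction function `H`: contracts the head redex, identity on head-normal
forms. -/
def H : Lam → Lam
  | var n => var n
  | lam M => lam (H M)
  | app (lam P) Q => subst P 0 Q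
  | app (var n) Q => app (var n) Q
  | app (app P₁ P₂) Q => app (H (app P₁ P₂)) Q

/-- The left-parallel reduction function `L`: identity on β-normal forms, propagated to
the arguments on head-normal forms, contraction of the head redex otherwise. -/
def L : Lam → Lam
  | var n => var n
  | lam M => lam (L M)
  | app (lam P) Q => subst P 0 Q
  | app (var n) Q => app (var n) (L Q)
  | app (app P₁ P₂) Q =>
      if neutral (app P₁ P₂) then app (L (app P₁ P₂)) (L Q)
      else app (L (app P₁ P₂)) Q

/-- Iterated application `M N₁ … Nₙ`. -/
def mkApps (M : Lam) (Ns : List Lam) : Lam := Ns.foldl app M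

/-- All free variables are `< d`. -/
def ClosedAt (d : ℕ) : Lam → Prop
  | var n => n < d
  | lam M => ClosedAt (d + 1) M
  | app P Q => ClosedAt d P ∧ ClosedAt d Q

/-- `M` is head-normalizable: it β-reduces in finitely many steps to a head-normal form. -/
def HeadNormalizable (M : Lam) : Prop :=
  ∃ N, Relation.ReflTransGen Beta M N ∧ isHNF N

/-- `M` is a β-normal form: it contains no β-redex, i.e. admits no β-step. -/
def BetaNF (M : Lam) : Prop := ¬∃ N, Beta M N

/-- `M` is β-normalizable: it β-reduces in finitely many steps to a β-normal form. -/
def BetaNormalizable (M : Lam) : Prop :=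
  ∃ N, Relation.ReflTransGen Beta M N ∧ BetaNF N

/-- `M` is strongly β-normalizable: no infinite β-reduction sequence starts from `M`. -/
def StronglyNormalizable (M : Lam) : Prop := Acc (fun N M' => Beta M' N) M

end Lam

/-! Rigid resource terms (the nonzero ones), in de Bruijn notation:
`a ::= x | λx.a | ⟨c⟩d⃗` with `d⃗` a list of rigid terms.
The term `0` is represented by `none : Option Rig`. -/
inductive Rig : Type
  | var : ℕ → Rig
  | lam : Rig → Rig
  | app : Rig → List Rig → Rig

namespace Rig

mutual
/-- Number of free occurrences of the variable `k` in a rigid term. -/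
def countR (k : ℕ) : Rig → ℕ
  | var n => if n = k then 1 else 0
  | lam a => countR (k + 1) a
  | app c ds => countR k c + countRList k ds
termination_by a => sizeOf a

def countRList (k : ℕ) : List Rig → ℕ
  | [] => 0
  | d :: ds => countR k d + countRList k ds
termination_by ds => sizeOf ds
end

mutual
/-- Shift the free indices `≥ d` up by one. -/
def liftR (d : ℕ) : Rig → Rig
  | var n => if n < d then var n else var (n + 1)
  | lam a => lam (liftR (d + 1) a)
  | app c ds => app (liftR d c) (liftRList d ds)
termination_by a => sizeOf a

def liftRList (d : ℕ) : List Rig → List Rig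
  | [] => []
  | a :: as => liftR d a :: liftRList d as
termination_by as => sizeOf as
end

mutual
/-- Rigid substitution `a[b⃗/k]`: the list `b⃗` is distributed, in order, over the
free occurrences of the variable `k`; the result is `none` (i.e. `0`) when
`|b⃗| ≠ n_k(a)`. -/
def rsubst (k : ℕ) : Rig → List Rig → Option Rig
  | var n, bs =>
      if n = k then (match bs with | [b] => some b | _ => none)
      else (match bs with
            | [] => some (if k < n then var (n - 1) else var n)
            | _ => none)
  | lam a, bs => (rsubst (k + 1) a (liftRList 0 bs)).map lam
  | app c ds, bs =>
      match rsubst k c (bs.take (countR k c)), rsubstList k ds (bs.drop (countR k c)) with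
      | some c', some ds' => some (app c' ds')
      | _, _ => none
termination_by a _ => sizeOf a

def rsubstList (k : ℕ) : List Rig → List Rig → Option (List Rig)
  | [], bs => if bs.isEmpty then some [] else none
  | d :: ds, bs =>
      match rsubst k d (bs.take (countR k d)), rsubstList k ds (bs.drop (countR k d)) with
      | some d', some ds' => some (d' :: ds')
      | _, _ => none
termination_by ds _ => sizeOf ds
end

/-- One-step rigid resource reduction `→_r` (contextual closure of
`⟨λx.a⟩b⃗ →_r a[b⃗/x]`); the result may be `0` (i.e. `none`), which annihilates
the surrounding context. -/
inductive RStep : Rig → Option Rig → Prop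
  | beta (a : Rig) (bs : List Rig) : RStep (app (lam a) bs) (rsubst 0 a bs)
  | lam {a r} : RStep a r → RStep (lam a) (r.map lam)
  | head {c r} (ds : List Rig) : RStep c r → RStep (app c ds) (r.map (fun c' => app c' ds))
  | arg {d r} (c : Rig) (ds₁ ds₂ : List Rig) :
      RStep d r → RStep (app c (ds₁ ++ d :: ds₂)) (r.map (fun d' => app c (ds₁ ++ d' :: ds₂)))

/-- `→_r` on rigid terms extended with `0`; `0` is inert. -/
inductive RStepO : Option Rig → Option Rig → Prop
  | mk {a r} : RStep a r → RStepO (some a) r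

/-- `r` is a `→_r`-normal form (`0` is one). -/
def RNormal (r : Option Rig) : Prop := ¬∃ r', RStepO r r'

/-- The head of the application spine is a variable, with no λ on the spine. -/
def rNeutral : Rig → Bool
  | var _ => true
  | lam _ => false
  | app c _ => rNeutral c

/-- Rigid head-normal forms among nonzero terms: `λx₁…λxₘ.⟨…⟨x⟩d⃗₁…⟩d⃗ₙ`
(the term `0` is a head-normal form, but it is treated separately). -/
def rIsHNF : Rig → Prop
  | var _ => True
  | lam a => rIsHNF a
  | app c _ => rNeutral c = true

/-- The rigid head-reduction function `H_r`: contracts the head redex, identity on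
head-normal forms; the result may be `0` (i.e. `none`). -/
def Hr : Rig → Option Rig
  | var n => some (var n)
  | lam a => (Hr a).map lam
  | app (lam a) bs => rsubst 0 a bs
  | app (var n) ds => some (app (var n) ds)
  | app (app c₁ c₂) ds => (Hr (app c₁ c₂)).map (fun c' => app c' ds)

/-- `H_r` extended to terms-or-`0`. -/
def HrO : Option Rig → Option Rig := fun r => r.bind Hr

mutual
/-- The rigid left-parallel reduction function `L_r`: identity on `→_r`-normal forms,
applied componentwise to the argument lists on head-normal forms, contraction of the
head redex otherwise; the result may be `0` (i.e. `none`). -/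
def Lr : Rig → Option Rig
  | var n => some (var n)
  | lam a => (Lr a).map lam
  | app (lam a) bs => rsubst 0 a bs
  | app (var n) ds => (LrList ds).map (fun ds' => app (var n) ds')
  | app (app c₁ c₂) ds =>
      if rNeutral (app c₁ c₂) then
        match Lr (app c₁ c₂), LrList ds with
        | some c', some ds' => some (app c' ds')
        | _, _ => none
      else (Lr (app c₁ c₂)).map (fun c' => app c' ds)
termination_by a => sizeOf a

def LrList : List Rig → Option (List Rig)
  | [] => some []
  | d :: ds =>
      match Lr d, LrList ds with
      | some d', some ds' => some (d' :: ds')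
      | _, _ => none
termination_by ds => sizeOf ds
end

/-- `L_r` extended to terms-or-`0`. -/
def LrO : Option Rig → Option Rig := fun r => r.bind Lr

/-- Positive resource terms: no empty list/multiset occurs as the argument of an
application. -/
inductive rPositive : Rig → Prop
  | var (n : ℕ) : rPositive (var n)
  | lam {a} : rPositive a → rPositive (lam a)
  | app {c : Rig} {ds : List Rig} :
      rPositive c → ds ≠ [] → (∀ d ∈ ds, rPositive d) → rPositive (app c ds)

end Rig

/-- The rigid expansion `T_r(M)` of a λ-term (equivalently, the support of its Taylor
expansion, with multisets presented by lists: `Texp M` is closed under permutation of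
argument lists). -/
def Texp : Lam → Set Rig
  | Lam.var n => {Rig.var n}
  | Lam.lam M => {a | ∃ b ∈ Texp M, a = Rig.lam b}
  | Lam.app P Q => {a | ∃ c ∈ Texp P, ∃ ds : List Rig, (∀ d ∈ ds, d ∈ Texp Q) ∧ a = Rig.app c ds}

namespace Rig

/-- The support of the `n`-linear substitution `∂_k a · b̄`, where the multiset `b̄` is
presented by the list `bs`: the finite formal sum (multiset) of all nonzero results of
rigid substitutions along bijective assignments, i.e. permutations of `bs`. -/
def permSubst (k : ℕ) (a : Rig) (bs : List Rig) : Multiset Rig :=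
  ↑(bs.permutations.filterMap (fun bs' => rsubst k a bs'))

/-- One step of non-erasing ε-resource reduction `→^{¬e}_{∂ε}` out of a single resource
term, producing a finite formal sum (a multiset) of resource terms: non-erasing resource
β-steps `⟨λx.a⟩b̄ → ∂_x a · b̄` (with `x ∈ FV(a)`) and resource σ₁-steps, under any
context. -/
inductive NEStep : Rig → Multiset Rig → Prop
  | beta {a : Rig} (bs : List Rig) :
      0 < countR 0 a → NEStep (app (lam a) bs) (permSubst 0 a bs)
  | sigma (a : Rig) (ts qs : List Rig) :
      NEStep (app (app (lam a) ts) qs) {app (lam (app a (liftRList 0 qs))) ts}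
  | lam {a σ} : NEStep a σ → NEStep (lam a) (σ.map lam)
  | head {c σ} (ds : List Rig) : NEStep c σ → NEStep (app c ds) (σ.map (fun c' => app c' ds))
  | arg {d σ} (c : Rig) (ds₁ ds₂ : List Rig) :
      NEStep d σ → NEStep (app c (ds₁ ++ d :: ds₂)) (σ.map (fun d' => app c (ds₁ ++ d' :: ds₂)))

/-- Non-erasing ε-resource reduction on finite formal sums, extended by linearity. -/
def NEStepSum (σ τ : Multiset Rig) : Prop :=
  ∃ (a : Rig) (ρ υ : Multiset Rig), σ = a ::ₘ ρ ∧ NEStep a υ ∧ τ = υ + ρ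

/-- `σ` is a `→^{¬e}_{∂ε}`-normal form. -/
def NENormal (σ : Multiset Rig) : Prop := ¬∃ τ, NEStepSum σ τ

end Rig

/-- One step of non-erasing ε-reduction on λ-terms: non-erasing β-steps
`(λx.M)N → M[N/x]` (with `x ∈ FV(M)`) together with σ₁-steps
`((λx.M)N)P → (λx.MP)N` (`x ∉ FV(P)`), under any context. -/
inductive NEeps : Lam → Lam → Prop
  | beta {M : Lam} (N : Lam) :
      0 < Lam.count 0 M → NEeps (Lam.app (Lam.lam M) N) (Lam.subst M 0 N)
  | sigma (M N P : Lam) :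
      NEeps (Lam.app (Lam.app (Lam.lam M) N) P)
        (Lam.app (Lam.lam (Lam.app M (Lam.lift 0 P))) N)
  | lam {M M'} : NEeps M M' → NEeps (Lam.lam M) (Lam.lam M')
  | appL {P P' Q} : NEeps P P' → NEeps (Lam.app P Q) (Lam.app P' Q)
  | appR {P Q Q'} : NEeps Q Q' → NEeps (Lam.app P Q) (Lam.app P Q')

/-- The set `S` of λ-terms. -/
inductive SLam : Lam → Prop
  | varApp (n : ℕ) (Ms : List Lam) :
      (∀ M ∈ Ms, SLam M) → SLam (Lam.mkApps (Lam.var n) Ms)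
  | lam {M} : SLam M → SLam (Lam.lam M)
  | redex (M₀ M₁ : Lam) (Ms : List Lam) :
      SLam M₁ → SLam (Lam.mkApps (Lam.subst M₀ 0 M₁) Ms) →
      SLam (Lam.mkApps (Lam.app (Lam.lam M₀) M₁) Ms)

/-- λI-terms: every abstraction binds a variable occurring free in its body. -/
def LamI : Lam → Prop
  | Lam.var _ => True
  | Lam.lam M => LamI M ∧ 0 < Lam.count 0 M
  | Lam.app P Q => LamI P ∧ LamI Q

namespace Rig

theorem liftRList_eq_map (d : ℕ) (as : List Rig) : liftRList d as = as.map (liftR d) := by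
  induction as with
  | nil => simp [liftRList]
  | cons a as ih => simp [liftRList, ih]

/-- Pulling back a list along a pointwise-surjective relation. -/
theorem exists_list_map {S T : Set Rig} (f : Rig → Rig)
    (h : ∀ b ∈ T, ∃ a ∈ S, b = f a) (ds : List Rig) (hd : ∀ d ∈ ds, d ∈ T) :
    ∃ es : List Rig, (∀ e ∈ es, e ∈ S) ∧ ds = es.map f := by
  induction ds with
  | nil => exact ⟨[], by simp, rfl⟩
  | cons d ds ih =>
    obtain ⟨a, ha, rfl⟩ := h d (hd d (by simp))
    obtain ⟨es, hes, rfl⟩ := ih (fun x hx => hd x (by simp [hx]))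
    refine ⟨a :: es, ?_, rfl⟩
    intro e he
    rcases List.mem_cons.1 he with rfl | he
    · exact ha
    · exact hes e he

theorem Texp_lift (M : Lam) : ∀ (d : ℕ) (b : Rig), b ∈ Texp (Lam.lift d M) →
    ∃ a ∈ Texp M, b = liftR d a := by
  induction M with
  | var n =>
    intro d b hb
    refine ⟨var n, rfl, ?_⟩
    by_cases h : n < d
    · simpa [Lam.lift, h, Texp, liftR] using hb
    · simpa [Lam.lift, h, Texp, liftR] using hb
  | lam M ih =>
    rintro d b ⟨c, hc, rfl⟩
    obtain ⟨a, ha, rfl⟩ := ih _ _ hc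
    exact ⟨lam a, ⟨a, ha, rfl⟩, by simp [liftR]⟩
  | app P Q ihP ihQ =>
    rintro d b ⟨c, hc, ds, hds, rfl⟩
    obtain ⟨a, ha, rfl⟩ := ihP _ _ hc
    obtain ⟨es, hes, rfl⟩ := exists_list_map _ (ihQ d) ds hds
    exact ⟨app a es, ⟨a, ha, es, hes, rfl⟩, by simp [liftR, liftRList_eq_map]⟩

theorem exists_list_subst {S T U : Set Rig} (k : ℕ)
    (h : ∀ b ∈ T, ∃ a ∈ S, ∃ bs : List Rig, (∀ x ∈ bs, x ∈ U) ∧ bs.length = countR k a ∧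
      rsubst k a bs = some b) (ds : List Rig) (hd : ∀ d ∈ ds, d ∈ T) :
    ∃ es : List Rig, (∀ e ∈ es, e ∈ S) ∧ ∃ bs : List Rig, (∀ x ∈ bs, x ∈ U) ∧
      rsubstList k es bs = some ds := by
  induction ds with
  | nil => exact ⟨[], by simp, [], by simp, by simp [rsubstList]⟩
  | cons d ds ih =>
    obtain ⟨a, ha, bs, hbs, hl, hs⟩ := h d (hd d (by simp))
    obtain ⟨es, hes, cs, hcs, hs'⟩ := ih (fun x hx => hd x (by simp [hx]))
    refine ⟨a :: es, ?_, bs ++ cs, ?_, ?_⟩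
    · intro e he
      rcases List.mem_cons.1 he with rfl | he
      · exact ha
      · exact hes e he
    · intro e he
      rcases List.mem_append.1 he with he | he
      · exact hbs e he
      · exact hcs e he
    · simp [rsubstList, ← hl, hs, hs']

mutual
theorem length_of_rsubst (k : ℕ) : ∀ (a : Rig) (bs : List Rig) (b : Rig),
    rsubst k a bs = some b → bs.length = countR k a
  | var n, bs, b, h => by
    by_cases hn : n = k
    · match bs with
      | [] => simp [rsubst, hn] at h
      | [c] => simp [countR, hn]
      | c :: c' :: cs => simp [rsubst, hn] at h
    · match bs with
      | [] => simp [countR, hn]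
      | [c] => simp [rsubst, hn] at h
      | c :: c' :: cs => simp [rsubst, hn] at h
  | lam a, bs, b, h => by
    simp only [rsubst, Option.map_eq_some_iff] at h
    obtain ⟨c, hc, _⟩ := h
    have := length_of_rsubst (k + 1) a _ c hc
    simpa [countR, liftRList_eq_map] using this
  | app c ds, bs, b, h => by
    rw [rsubst] at h
    split at h
    · rename_i c' ds' h1 h2
      have e1 := length_of_rsubst k c _ _ h1
      have e2 := length_of_rsubstList k ds _ _ h2
      simp only [List.length_take, List.length_drop] at e1 e2
      rw [countR]; omega
    · cases h
termination_by a => sizeOf a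

theorem length_of_rsubstList (k : ℕ) : ∀ (ds bs es : List Rig),
    rsubstList k ds bs = some es → bs.length = countRList k ds
  | [], bs, es, h => by
    cases bs with
    | nil => simp [countRList]
    | cons b bs => simp [rsubstList] at h
  | d :: ds, bs, es, h => by
    rw [rsubstList] at h
    split at h
    · rename_i c' ds' h1 h2
      have e1 := length_of_rsubst k d _ _ h1
      have e2 := length_of_rsubstList k ds _ _ h2
      simp only [List.length_take, List.length_drop] at e1 e2
      rw [countRList]; omega
    · cases h
termination_by ds => sizeOf ds
end

theorem Texp_subst (M : Lam) : ∀ (k : ℕ) (N : Lam) (b : Rig), b ∈ Texp (Lam.subst M k N) →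
    ∃ a ∈ Texp M, ∃ bs : List Rig, (∀ x ∈ bs, x ∈ Texp N) ∧ rsubst k a bs = some b := by
  induction M with
  | var n =>
    intro k N b hb
    refine ⟨var n, rfl, ?_⟩
    by_cases h : n = k
    · simp only [Lam.subst, h, if_true] at hb
      exact ⟨[b], by simpa using hb, by simp [rsubst, h]⟩
    · refine ⟨[], by simp, ?_⟩
      by_cases h' : k < n
      · simp only [Lam.subst, h, h', if_true, if_false] at hb
        have hb : b = var (n - 1) := hb
        simp [rsubst, h, h', hb]
      · simp only [Lam.subst, h, h', if_false] at hb
        have hb : b = var n := hb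
        simp [rsubst, h, h', hb]
  | lam M ih =>
    rintro k N b ⟨c, hc, rfl⟩
    obtain ⟨a, ha, bs, hbs, hs⟩ := ih _ _ _ hc
    obtain ⟨cs, hcs, rfl⟩ := exists_list_map _ (Texp_lift N 0) bs hbs
    exact ⟨lam a, ⟨a, ha, rfl⟩, cs, hcs, by simp [rsubst, liftRList_eq_map, hs]⟩
  | app P Q ihP ihQ =>
    rintro k N b ⟨c, hc, ds, hds, rfl⟩
    obtain ⟨a, ha, bs, hbs, hs⟩ := ihP _ _ _ hc
    have hl := length_of_rsubst _ _ _ _ hs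
    obtain ⟨es, hes, cs, hcs, hs'⟩ := exists_list_subst (S := Texp Q) (U := Texp N) k
      (fun b hb => by
        obtain ⟨a, ha, bs, hbs, hs⟩ := ihQ k N b hb
        exact ⟨a, ha, bs, hbs, length_of_rsubst _ _ _ _ hs, hs⟩) ds hds
    refine ⟨app a es, ⟨a, ha, es, hes, rfl⟩, bs ++ cs, ?_, ?_⟩
    · intro e he
      rcases List.mem_append.1 he with he | he
      · exact hbs e he
      · exact hcs e he
    · simp [rsubst, ← hl, hs, hs']

/-- Many-step reduction between nonzero terms. -/
inductive Steps : Rig → Rig → Prop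
  | refl (a) : Steps a a
  | head {a b c} : RStep a (some b) → Steps b c → Steps a c

theorem Steps.trans {a b c : Rig} (h : Steps a b) (h' : Steps b c) : Steps a c := by
  induction h with
  | refl => exact h'
  | head s _ ih => exact .head s (ih h')

theorem Steps.map {a b : Rig} (f : Rig → Rig)
    (hf : ∀ x y, RStep x (some y) → RStep (f x) (some (f y))) (h : Steps a b) :
    Steps (f a) (f b) := by
  induction h with
  | refl => exact .refl _
  | head s _ ih => exact .head (hf _ _ s) ih

theorem Steps.toGen {a b : Rig} (h : Steps a b) :
    Relation.ReflTransGen RStepO (some a) (some b) := by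
  induction h with
  | refl => exact .refl
  | head s _ ih => exact .head (.mk s) ih

theorem Steps.args (c : Rig) {es ds : List Rig} (h : List.Forall₂ Steps es ds) :
    ∀ pre : List Rig, Steps (app c (pre ++ es)) (app c (pre ++ ds)) := by
  induction h with
  | nil => intro pre; exact .refl _
  | @cons e d es ds h _ ih =>
    intro pre
    have h1 : Steps (app c (pre ++ e :: es)) (app c (pre ++ d :: es)) :=
      h.map (fun x => app c (pre ++ x :: es)) (fun x y s => .arg c pre es s)
    have h2 := ih (pre ++ [d])
    simp only [List.append_assoc, List.singleton_append] at h2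
    exact h1.trans h2

theorem Beta_pullback {M N : Lam} (h : Lam.Beta M N) :
    ∀ b ∈ Texp N, ∃ a ∈ Texp M, Steps a b := by
  induction h with
  | beta M N =>
    intro b hb
    obtain ⟨a, ha, bs, hbs, hs⟩ := Texp_subst M 0 N b hb
    refine ⟨app (lam a) bs, ⟨_, ⟨a, ha, rfl⟩, bs, hbs, rfl⟩, ?_⟩
    exact .head (hs ▸ RStep.beta a bs) (.refl _)
  | lam _ ih =>
    rintro _ ⟨b, hb, rfl⟩
    obtain ⟨a, ha, hs⟩ := ih b hb
    exact ⟨lam a, ⟨a, ha, rfl⟩, hs.map lam (fun x y s => .lam s)⟩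
  | appL _ ih =>
    rintro _ ⟨b, hb, ds, hds, rfl⟩
    obtain ⟨a, ha, hs⟩ := ih b hb
    exact ⟨app a ds, ⟨a, ha, ds, hds, rfl⟩, hs.map (fun x => app x ds) (fun x y s => .head ds s)⟩
  | @appR P Q Q' _ ih =>
    rintro _ ⟨b, hb, ds, hds, rfl⟩
    have : ∃ es : List Rig, (∀ e ∈ es, e ∈ Texp Q) ∧ List.Forall₂ Steps es ds := by
      clear hb
      induction ds with
      | nil => exact ⟨[], by simp, .nil⟩
      | cons d ds ihd =>
        obtain ⟨a, ha, hs⟩ := ih d (hds d (by simp))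
        obtain ⟨es, hes, hf⟩ := ihd (fun x hx => hds x (by simp [hx]))
        refine ⟨a :: es, ?_, .cons hs hf⟩
        intro e he
        rcases List.mem_cons.1 he with rfl | he
        · exact ha
        · exact hes e he
    obtain ⟨es, hes, hf⟩ := this
    exact ⟨app b es, ⟨b, hb, es, hes, rfl⟩, Steps.args b hf []⟩

theorem Betas_pullback {M N : Lam} (h : Relation.ReflTransGen Lam.Beta M N) :
    ∀ b ∈ Texp N, ∃ a ∈ Texp M, Steps a b := by
  induction h using Relation.ReflTransGen.head_induction_on with
  | refl => exact fun b hb => ⟨b, hb, .refl _⟩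
  | head s _ ih =>
    intro b hb
    obtain ⟨c, hc, h1⟩ := ih b hb
    obtain ⟨a, ha, h2⟩ := Beta_pullback s c hc
    exact ⟨a, ha, h2.trans h1⟩

theorem RStep_reflect {a : Rig} {r : Option Rig} (h : RStep a r) :
    ∀ M : Lam, a ∈ Texp M → ∃ N, Lam.Beta M N := by
  induction h with
  | beta a bs =>
    intro M hM
    match M, hM with
    | .var n, hM => cases hM
    | .lam M, ⟨_, _, e⟩ => cases e
    | .app (.lam P) Q, _ => exact ⟨_, .beta P Q⟩
    | .app (.var n) Q, ⟨c, hc, ds, _, e⟩ => cases hc; cases e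
    | .app (.app P P') Q, ⟨c, ⟨_, _, _, _, e'⟩, ds, _, e⟩ => subst e'; cases e
  | lam _ ih =>
    intro M hM
    match M, hM with
    | .var n, hM => cases hM
    | .lam M, ⟨b, hb, e⟩ =>
      cases e
      obtain ⟨N, hN⟩ := ih M hb
      exact ⟨_, .lam hN⟩
    | .app P Q, ⟨_, _, _, _, e⟩ => cases e
  | head ds _ ih =>
    intro M hM
    match M, hM with
    | .var n, hM => cases hM
    | .lam M, ⟨_, _, e⟩ => cases e
    | .app P Q, ⟨c, hc, _, _, e⟩ =>
      cases e
      obtain ⟨N, hN⟩ := ih P hc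
      exact ⟨_, .appL hN⟩
  | arg c ds₁ ds₂ _ ih =>
    intro M hM
    match M, hM with
    | .var n, hM => cases hM
    | .lam M, ⟨_, _, e⟩ => cases e
    | .app P Q, ⟨c, hc, _, hds, e⟩ =>
      cases e
      obtain ⟨N, hN⟩ := ih Q (hds _ (by simp))
      exact ⟨_, .appR hN⟩

theorem exists_positive (M : Lam) : ∃ a ∈ Texp M, rPositive a := by
  induction M with
  | var n => exact ⟨var n, rfl, .var n⟩
  | lam M ih =>
    obtain ⟨a, ha, hp⟩ := ih
    exact ⟨lam a, ⟨a, ha, rfl⟩, .lam hp⟩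
  | app P Q ihP ihQ =>
    obtain ⟨a, ha, hp⟩ := ihP
    obtain ⟨b, hb, hq⟩ := ihQ
    exact ⟨app a [b], ⟨a, ha, [b], by simpa using hb, rfl⟩, .app hp (by simp) (by simpa using hq)⟩

end Rig

/-- if `M` is β-normalizable then some `a ∈ T_r(M)` has a positive rigid
term as its `→_r`-normal form `NF(a)`. -/
theorem positive_NF_of_beta_normalizable {M : Lam} (h : Lam.BetaNormalizable M) :
    ∃ a ∈ Texp M, ∃ b : Rig,
      Relation.ReflTransGen Rig.RStepO (some a) (some b) ∧ Rig.RNormal (some b) ∧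
        Rig.rPositive b := by
  obtain ⟨N, hMN, hN⟩ := h
  obtain ⟨b, hb, hp⟩ := Rig.exists_positive N
  obtain ⟨a, ha, hs⟩ := Rig.Betas_pullback hMN b hb
  refine ⟨a, ha, b, hs.toGen, ?_, hp⟩
  rintro ⟨r, ⟨hr⟩⟩
  exact hN (Rig.RStep_reflect hr N hb)
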